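/- arXiv:2211.04891 — 4 statements merged into one kernel-verified Lean document; each statement's English description precedes it below -/
import Mathlib

section
/- In the obstacle-problem setting, the obstacle-problem solution w satisfies φ(a) ≤ w(a) ≤ 0 for every a ∈ cl(V) and Δw(a) ≤ 𝔯(a) for every a ∈ V. Moreover, if 𝔮 : V(G) → ℝ satisfies Δ𝔮(a) = 𝔯(a) for every a ∈ V and 𝔮(b) = 0 for every b ∈ ∂V, then 𝔮(a) ≤ w(a) for every a ∈ cl(V); in summary, max(𝔮, φ) ≤ w ≤ 0 on cl(V). -/
/-!
The set of admissible functions is nonempty (it contains `0`) and bounded below by `φ` on `cl(V)`,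
so `φ ≤ w ≤ 0` there.  A pointwise infimum of functions with `Δu ≤ 𝔯` inherits this bound: at
`a ∈ V` the inequality reads `∑_{b ∼ a} u b ≤ deg a * (𝔯 a + u a)`, whose left side only decreases
when `u` is replaced by `w`, after which the infimum over `u` can be taken on the right
(`lap_obstSol_le`).

For `𝔮 ≤ w` it suffices that `𝔮 ≤ u` for each admissible `u`.  The difference `𝔮 - u` is
subharmonic on `V` and nonpositive on `∂V`, since `u ≥ φ = 0` there; the maximum principle
(`nonpos_of_subharmonic`) then applies.
-/

open Finset

/-- Degree-normalized graph Laplacian: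
`Δu(a) = (1/deg a) * ∑_{b ∼ a} (u b - u a)`. -/
noncomputable def lap {V : Type*} (G : SimpleGraph V) [∀ v : V, Fintype (G.neighborSet v)]
    (u : V → ℝ) (a : V) : ℝ :=
  (1 / (G.degree a : ℝ)) * ∑ b ∈ G.neighborFinset a, (u b - u a)

/-- Outer vertex boundary of a finite set of vertices: vertices not in `A`
adjacent to some vertex of `A`. -/
def bdry {V : Type*} [DecidableEq V] (G : SimpleGraph V) [∀ v : V, Fintype (G.neighborSet v)]
    (A : Finset V) : Finset V :=
  (A.biUnion fun a => G.neighborFinset a) \ A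

/-- Closure `cl(A) = A ∪ ∂A` of a finite set of vertices. -/
def clo {V : Type*} [DecidableEq V] (G : SimpleGraph V) [∀ v : V, Fintype (G.neighborSet v)]
    (A : Finset V) : Finset V :=
  A ∪ bdry G A

/-- A function `u` is admissible for the discrete obstacle problem with threshold `r`
and obstacle `φ` on the vertex set `Vs` if `Δu ≤ r` on `Vs` and `u ≥ φ` on `cl(Vs)`. -/
def Admissible {V : Type*} [DecidableEq V] (G : SimpleGraph V)
    [∀ v : V, Fintype (G.neighborSet v)]
    (Vs : Finset V) (r φ u : V → ℝ) : Prop :=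
  (∀ a ∈ Vs, lap G u a ≤ r a) ∧ ∀ b ∈ clo G Vs, φ b ≤ u b

/-- The solution of the discrete obstacle problem: the pointwise infimum over all
admissible functions. -/
noncomputable def obstSol {V : Type*} [DecidableEq V] (G : SimpleGraph V)
    [∀ v : V, Fintype (G.neighborSet v)]
    (Vs : Finset V) (r φ : V → ℝ) (a : V) : ℝ :=
  sInf {x | ∃ u : V → ℝ, Admissible G Vs r φ u ∧ u a = x}

lemma mem_clo_of_adj {V : Type*} [DecidableEq V] (G : SimpleGraph V)
    [∀ v : V, Fintype (G.neighborSet v)] {A : Finset V} {a b : V} (ha : a ∈ A)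
    (hab : G.Adj a b) : b ∈ clo G A := by
  by_cases hb : b ∈ A
  · exact Finset.mem_union_left _ hb
  · refine Finset.mem_union_right _ (Finset.mem_sdiff.2 ⟨Finset.mem_biUnion.2 ⟨a, ha, ?_⟩, hb⟩)
    simpa using hab

lemma lap_sub {V : Type*} (G : SimpleGraph V) [∀ v : V, Fintype (G.neighborSet v)]
    (f g : V → ℝ) (a : V) : lap G (fun x => f x - g x) a = lap G f a - lap G g a := by
  unfold lap
  rw [← mul_sub, ← Finset.sum_sub_distrib]
  congr 1
  exact Finset.sum_congr rfl fun b _ => by ring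

/-- The Laplacian inequality with the denominator cleared and `u a` moved to the right. -/
lemma lap_le_iff {V : Type*} (G : SimpleGraph V) [∀ v : V, Fintype (G.neighborSet v)]
    (u : V → ℝ) (a : V) (c : ℝ) (h : 0 < G.degree a) :
    lap G u a ≤ c ↔ ∑ b ∈ G.neighborFinset a, u b ≤ (G.degree a : ℝ) * (c + u a) := by
  have hd : (0 : ℝ) < G.degree a := by exact_mod_cast h
  unfold lap
  rw [one_div, inv_mul_le_iff₀ hd, Finset.sum_sub_distrib, Finset.sum_const,
    SimpleGraph.card_neighborFinset_eq_degree, nsmul_eq_mul, sub_le_iff_le_add, mul_add]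

/-- Maximum principle: on an infinite connected graph, a function that is subharmonic on a finite
set and nonpositive on its boundary is nonpositive.  A positive maximum would be attained inside
the set and spread to all neighbours, hence to the whole graph, which is infinite. -/
lemma nonpos_of_subharmonic {V : Type*} [DecidableEq V] [Infinite V]
    (G : SimpleGraph V) [∀ v : V, Fintype (G.neighborSet v)] (hG : G.Connected)
    (A : Finset V) (d : V → ℝ) (hlap : ∀ a ∈ A, 0 ≤ lap G d a)
    (hbd : ∀ b ∈ bdry G A, d b ≤ 0) : ∀ a ∈ clo G A, d a ≤ 0 := by
  intro a₀ ha₀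
  by_contra! hpos
  obtain ⟨m, hm, hmax⟩ := Finset.exists_max_image (clo G A) d ⟨a₀, ha₀⟩
  have hmpos : 0 < d m := hpos.trans_le (hmax a₀ ha₀)
  have inside : ∀ x ∈ clo G A, d x = d m → x ∈ A := by
    intro x hx hxm
    rcases Finset.mem_union.1 hx with h | h
    · exact h
    · linarith [hbd x h]
  have step : ∀ x y, G.Adj x y → (x ∈ A ∧ d x = d m) → (y ∈ A ∧ d y = d m) := by
    rintro x y hxy ⟨hxA, hxm⟩
    have hy : y ∈ clo G A := mem_clo_of_adj G hxA hxy
    have hyn : y ∈ G.neighborFinset x := by simpa using hxy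
    have hle : ∀ b ∈ G.neighborFinset x, d b - d x ≤ 0 := by
      intro b hb
      have hb' : G.Adj x b := by simpa using hb
      linarith [hmax b (mem_clo_of_adj G hxA hb')]
    have hdeg : (0 : ℝ) < 1 / (G.degree x : ℝ) := by
      have : 0 < G.degree x := (G.degree_pos_iff_exists_adj x).2 ⟨y, hxy⟩
      positivity
    have hsum : 0 ≤ ∑ b ∈ G.neighborFinset x, (d b - d x) :=
      nonneg_of_mul_nonneg_right (hlap x hxA) hdeg
    have hzero := (Finset.sum_eq_zero_iff_of_nonpos hle).1
      (le_antisymm (Finset.sum_nonpos hle) hsum) y hyn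
    have hym : d y = d m := by linarith
    exact ⟨inside y hy hym, hym⟩
  have all : ∀ x, x ∈ A ∧ d x = d m := by
    intro x
    obtain ⟨p⟩ := hG.preconnected m x
    have key : ∀ u v : V, G.Walk u v → (u ∈ A ∧ d u = d m) → (v ∈ A ∧ d v = d m) := by
      intro u v p
      induction p with
      | nil => exact id
      | cons h _ ih => exact fun hu => ih (step _ _ h hu)
    exact key m x p ⟨inside m hm rfl, rfl⟩
  obtain ⟨x, hx⟩ := Infinite.exists_notMem_finset A
  exact hx (all x).1

lemma admissible_zero {V : Type*} [DecidableEq V] (G : SimpleGraph V)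
    [∀ v : V, Fintype (G.neighborSet v)] (Vs : Finset V) (r φ : V → ℝ)
    (hr : ∀ a ∈ Vs, 0 < r a) (hφ0 : ∀ b ∈ clo G Vs, φ b ≤ 0) :
    Admissible G Vs r φ (fun _ => 0) :=
  ⟨fun a ha => by simpa [lap] using (hr a ha).le, hφ0⟩

lemma obstSol_le {V : Type*} [DecidableEq V] (G : SimpleGraph V)
    [∀ v : V, Fintype (G.neighborSet v)] {Vs : Finset V} {r φ u : V → ℝ}
    (hu : Admissible G Vs r φ u) {a : V} (ha : a ∈ clo G Vs) : obstSol G Vs r φ a ≤ u a := by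
  refine csInf_le ⟨φ a, ?_⟩ ⟨u, hu, rfl⟩
  rintro x ⟨v, hv, rfl⟩
  exact hv.2 a ha

lemma le_obstSol {V : Type*} [DecidableEq V] (G : SimpleGraph V)
    [∀ v : V, Fintype (G.neighborSet v)] {Vs : Finset V} {r φ u : V → ℝ}
    (hu : Admissible G Vs r φ u) {a : V} {c : ℝ}
    (h : ∀ v, Admissible G Vs r φ v → c ≤ v a) : c ≤ obstSol G Vs r φ a := by
  refine le_csInf ⟨u a, u, hu, rfl⟩ ?_
  rintro x ⟨v, hv, rfl⟩
  exact h v hv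

lemma lap_obstSol_le {V : Type*} [DecidableEq V] (G : SimpleGraph V)
    [∀ v : V, Fintype (G.neighborSet v)] {Vs : Finset V} {r φ u : V → ℝ}
    (hu : Admissible G Vs r φ u) {a : V} (ha : a ∈ Vs) (hdeg : 0 < G.degree a) :
    lap G (obstSol G Vs r φ) a ≤ r a := by
  have hd : (0 : ℝ) < G.degree a := by exact_mod_cast hdeg
  rw [lap_le_iff G _ _ _ hdeg, ← div_le_iff₀' hd, ← sub_le_iff_le_add']
  refine le_obstSol G hu fun v hv => ?_
  rw [sub_le_iff_le_add', div_le_iff₀' hd]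
  refine le_trans (Finset.sum_le_sum fun b hb => ?_) ((lap_le_iff G v a _ hdeg).1 (hv.1 a ha))
  exact obstSol_le G hv (mem_clo_of_adj G ha (by simpa using hb))

/-- **Basic properties of the discrete obstacle problem (Lemma A.2).**
In the obstacle-problem setting, the solution `w` satisfies `φ ≤ w ≤ 0` on `cl(V)`
and `Δw ≤ 𝔯` on `V`; moreover if `𝔮` satisfies `Δ𝔮 = 𝔯` on `V` and `𝔮 = 0` on `∂V`,
then `𝔮 ≤ w` on `cl(V)`. -/
theorem obstacle_basic_properties {V : Type*} [DecidableEq V] [Infinite V]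
    (G : SimpleGraph V) [∀ v : V, Fintype (G.neighborSet v)]
    (hG : G.Connected)
    (Vs : Finset V) (hVne : Vs.Nonempty)
    (hVconn : (G.induce (Vs : Set V)).Connected)
    (o : V) (ho : o ∈ Vs)
    (r : V → ℝ) (hr : ∀ a ∈ Vs, 0 < r a)
    (t : ℝ) (ht : 0 < t)
    (φ : V → ℝ)
    (hφ0 : ∀ b ∈ clo G Vs, φ b ≤ 0)
    (hφlap : ∀ a ∈ Vs, lap G φ a = if a = o then t else 0)
    (hφbd : ∀ b ∈ bdry G Vs, φ b = 0) :
    (∀ a ∈ clo G Vs, φ a ≤ obstSol G Vs r φ a ∧ obstSol G Vs r φ a ≤ 0) ∧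
    (∀ a ∈ Vs, lap G (obstSol G Vs r φ) a ≤ r a) ∧
    (∀ q : V → ℝ, (∀ a ∈ Vs, lap G q a = r a) → (∀ b ∈ bdry G Vs, q b = 0) →
      ∀ a ∈ clo G Vs, q a ≤ obstSol G Vs r φ a) := by
  have h0 := admissible_zero G Vs r φ hr hφ0
  refine ⟨fun a ha => ⟨le_obstSol G h0 fun v hv => hv.2 a ha, obstSol_le G h0 ha⟩,
    fun a ha => lap_obstSol_le G h0 ha (hG.preconnected.degree_pos_of_nontrivial a), ?_⟩
  intro q hq hqbd a ha
  refine le_obstSol G h0 fun v hv => ?_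
  have := nonpos_of_subharmonic G hG Vs (fun x => q x - v x)
    (fun x hx => by rw [lap_sub, hq x hx]; linarith [hv.1 x hx])
    (fun b hb => by
      have := hv.2 b (Finset.mem_union_right _ hb)
      rw [hφbd b hb] at this
      linarith [hqbd b hb]) a ha
  linarith
end

section
/- In the obstacle-problem setting, if 𝔱 > 𝔯(o), then the marked vertex o belongs to the discrete cluster, i.e. w(o) > φ(o). -/
/-!
The bound is explicit: every admissible `u` satisfies `u o ≥ φ o + (t - r o)`.
Indeed `u ≥ φ` at all neighbours of `o`, so averaging over them gives
`Δφ(o) + φ(o) ≤ Δu(o) + u(o)`, where `Δφ(o) = t` and `Δu(o) ≤ r o`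
(`lap_add_le_lap_add`). The infimum inherits this bound because the zero function is
admissible, so the infimum is over a nonempty set.
-/

open Finset

/-- `Δu(a) + u(a)` is the average of `u` over the neighbours of `a`, hence monotone in the
neighbouring values of `u`. -/
lemma lap_add_le_lap_add {V : Type*} (G : SimpleGraph V)
    [∀ v : V, Fintype (G.neighborSet v)] {φ u : V → ℝ} {a : V} (hdeg : G.degree a ≠ 0)
    (h : ∀ b ∈ G.neighborFinset a, φ b ≤ u b) :
    lap G φ a + φ a ≤ lap G u a + u a := by
  have hd : (G.degree a : ℝ) ≠ 0 := by exact_mod_cast hdeg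
  have key (v : V → ℝ) :
      lap G v a + v a = (1 / (G.degree a : ℝ)) * ∑ b ∈ G.neighborFinset a, v b := by
    simp only [lap, Finset.sum_sub_distrib, Finset.sum_const,
      SimpleGraph.card_neighborFinset_eq_degree, nsmul_eq_mul]
    field_simp
    ring
  rw [key, key]
  exact mul_le_mul_of_nonneg_left (Finset.sum_le_sum h) (by positivity)

/-- **The marked vertex belongs to the cluster (Lemma A.3, last part).**
In the obstacle-problem setting, if `𝔱 > 𝔯(o)` then the marked vertex `o` belongs to
the discrete cluster, i.e. `w(o) > φ(o)`. -/
theorem obstacle_origin_in_cluster {V : Type*} [DecidableEq V] [Infinite V]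
    (G : SimpleGraph V) [∀ v : V, Fintype (G.neighborSet v)]
    (hG : G.Connected)
    (Vs : Finset V) (hVne : Vs.Nonempty)
    (hVconn : (G.induce (Vs : Set V)).Connected)
    (o : V) (ho : o ∈ Vs)
    (r : V → ℝ) (hr : ∀ a ∈ Vs, 0 < r a)
    (t : ℝ) (ht : 0 < t)
    (φ : V → ℝ)
    (hφ0 : ∀ b ∈ clo G Vs, φ b ≤ 0)
    (hφlap : ∀ a ∈ Vs, lap G φ a = if a = o then t else 0)
    (hφbd : ∀ b ∈ bdry G Vs, φ b = 0)
    (hto : r o < t) :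
    φ o < obstSol G Vs r φ o := by
  have hlapo : lap G φ o = t := by simpa using hφlap o ho
  -- With degree zero the junk value `1 / 0 = 0` would make the Laplacian vanish.
  have hdeg : G.degree o ≠ 0 := by
    intro h
    have : lap G φ o = 0 := by simp [lap, h]
    linarith
  have hnb : ∀ b ∈ G.neighborFinset o, b ∈ clo G Vs := by
    intro b hb
    by_cases hbV : b ∈ Vs
    · exact Finset.mem_union_left _ hbV
    · exact Finset.mem_union_right _
        (Finset.mem_sdiff.2 ⟨Finset.mem_biUnion.2 ⟨o, ho, hb⟩, hbV⟩)
  have hbound : φ o + (t - r o) ≤ obstSol G Vs r φ o := by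
    refine le_csInf ⟨0, fun _ => 0, ⟨fun a ha => ?_, hφ0⟩, rfl⟩ ?_
    · simpa [lap] using (hr a ha).le
    · rintro x ⟨u, ⟨hu, huφ⟩, rfl⟩
      have h1 := lap_add_le_lap_add G hdeg fun b hb => huφ b (hnb b hb)
      have h2 := hu o ho
      linarith
  linarith
end

section
/- Let G be an infinite, connected, locally finite simple graph, let A be a finite nonempty set of vertices, and let C ≥ 0 be real. Suppose u, f, Q : V(G) → ℝ satisfy: Δf(a) = 0 for all a ∈ A and f(b) = u(b) for all b ∈ ∂A; ΔQ(a) = −1 for all a ∈ A and Q(b) = 0 for all b ∈ ∂A; and |Δu(a)| ≤ C for all a ∈ A. Then |u(a) − f(a)| ≤ C · Q(a) for every a ∈ cl(A). -/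
/-!
The proof is the minimum principle for superharmonic functions (`nonneg_of_lap_nonpos`), applied
to `w = C * Q + (u - f)` and `w = C * Q - (u - f)`: both vanish on `∂A`, and on `A` they satisfy
`Δw = -C ± Δu ≤ 0`.

For the minimum principle, suppose `w` had a negative minimum over `A`. At a vertex where it is
attained, superharmonicity forces all neighbours to carry the same value; being negative, that
value is not taken on `∂A`, so the neighbours lie in `A` as well. By connectedness every vertex of
the graph lies in the finite set `A`, which is impossible in an infinite graph.
-/

open Finset

theorem lap_linear_comb {V : Type*} (G : SimpleGraph V) [∀ v : V, Fintype (G.neighborSet v)]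
    (r s t : ℝ) (u f Q : V → ℝ) (a : V) :
    lap G (fun v => r * Q v + s * u v + t * f v) a
      = r * lap G Q a + s * lap G u a + t * lap G f a := by
  have h : ∑ b ∈ G.neighborFinset a,
      ((r * Q b + s * u b + t * f b) - (r * Q a + s * u a + t * f a))
      = r * ∑ b ∈ G.neighborFinset a, (Q b - Q a) + s * ∑ b ∈ G.neighborFinset a, (u b - u a)
        + t * ∑ b ∈ G.neighborFinset a, (f b - f a) := by
    rw [Finset.mul_sum, Finset.mul_sum, Finset.mul_sum, ← Finset.sum_add_distrib,
      ← Finset.sum_add_distrib]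
    exact Finset.sum_congr rfl fun b _ => by ring
  unfold lap
  rw [h]
  ring

theorem sum_nonpos_of_lap_nonpos {V : Type*} (G : SimpleGraph V)
    [∀ v : V, Fintype (G.neighborSet v)] (w : V → ℝ) (a : V) (h : lap G w a ≤ 0) :
    ∑ b ∈ G.neighborFinset a, (w b - w a) ≤ 0 := by
  rcases Nat.eq_zero_or_pos (G.degree a) with h0 | hpos
  · rw [← G.card_neighborFinset_eq_degree, Finset.card_eq_zero] at h0
    simp [h0]
  · have hd : (0 : ℝ) < 1 / (G.degree a : ℝ) := by positivity
    unfold lap at h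
    by_contra! hs
    exact absurd (mul_pos hd hs) (not_lt.mpr h)

/-- Minimum principle: a function superharmonic on the finite set `A` and nonnegative on `∂A` is
nonnegative on `A`. -/
theorem nonneg_of_lap_nonpos {V : Type*} [DecidableEq V] [Infinite V]
    (G : SimpleGraph V) [∀ v : V, Fintype (G.neighborSet v)] (hG : G.Connected)
    (A : Finset V) (w : V → ℝ) (hw : ∀ a ∈ A, lap G w a ≤ 0)
    (hb : ∀ b ∈ bdry G A, 0 ≤ w b) : ∀ a ∈ A, 0 ≤ w a := by
  intro a ha
  by_contra! hneg
  obtain ⟨m, hmA, hmin⟩ := A.exists_min_image w ⟨a, ha⟩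
  have hm : w m < 0 := (hmin a ha).trans_lt hneg
  have hnbr : ∀ x ∈ A, ∀ y, G.Adj x y → y ∈ A ∨ 0 ≤ w y := by
    intro x hx y hxy
    by_cases hy : y ∈ A
    · exact Or.inl hy
    · refine Or.inr (hb y ?_)
      simp only [bdry, Finset.mem_sdiff, Finset.mem_biUnion, SimpleGraph.mem_neighborFinset]
      exact ⟨⟨x, hx, hxy⟩, hy⟩
  -- The set of minimizers in `A` is closed under passing to neighbours.
  have hstep : ∀ x y, G.Adj x y → x ∈ A ∧ w x = w m → y ∈ A ∧ w y = w m := by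
    rintro x y hxy ⟨hx, hxm⟩
    have hge : ∀ b ∈ G.neighborFinset x, 0 ≤ w b - w x := by
      intro b hbx
      rw [SimpleGraph.mem_neighborFinset] at hbx
      rcases hnbr x hx b hbx with h | h
      · linarith [hmin b h]
      · linarith
    have hzero := (Finset.sum_eq_zero_iff_of_nonneg hge).mp
      (le_antisymm (sum_nonpos_of_lap_nonpos G w x (hw x hx)) (Finset.sum_nonneg hge))
      y ((G.mem_neighborFinset x y).mpr hxy)
    rcases hnbr x hx y hxy with h | h
    · exact ⟨h, by linarith⟩
    · linarith
  have hwalk : ∀ x y, G.Walk x y → x ∈ A ∧ w x = w m → y ∈ A ∧ w y = w m := by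
    intro x y p
    induction p with
    | nil => exact id
    | cons h _ ih => exact fun hx => ih (hstep _ _ h hx)
  obtain ⟨v, hv⟩ := Infinite.exists_notMem_finset A
  obtain ⟨p⟩ := hG.preconnected m v
  exact hv (hwalk m v p ⟨hmA, rfl⟩).1

/-- **Harmonic comparison.** On an infinite, connected, locally finite graph, if `f` is
the harmonic extension of `u` on the finite nonempty set `A` (i.e. `Δf = 0` on `A` and
`f = u` on `∂A`), `Q` satisfies `ΔQ = -1` on `A` and `Q = 0` on `∂A`, and `|Δu| ≤ C`
on `A`, then `|u - f| ≤ C·Q` on `cl(A)`. -/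
theorem harmonic_extension_comparison {V : Type*} [DecidableEq V] [Infinite V]
    (G : SimpleGraph V) [∀ v : V, Fintype (G.neighborSet v)]
    (hG : G.Connected)
    (A : Finset V) (hA : A.Nonempty)
    (C : ℝ) (hC : 0 ≤ C)
    (u f Q : V → ℝ)
    (hf : ∀ a ∈ A, lap G f a = 0)
    (hfb : ∀ b ∈ bdry G A, f b = u b)
    (hQ : ∀ a ∈ A, lap G Q a = -1)
    (hQb : ∀ b ∈ bdry G A, Q b = 0)
    (hu : ∀ a ∈ A, |lap G u a| ≤ C) :
    ∀ a ∈ clo G A, |u a - f a| ≤ C * Q a := by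
  have hplus := nonneg_of_lap_nonpos G hG A (fun v => C * Q v + 1 * u v + (-1) * f v)
    (fun a ha => by
      rw [lap_linear_comb, hQ a ha, hf a ha]
      linarith [(abs_le.mp (hu a ha)).2])
    (fun b hb => by simp [hfb b hb, hQb b hb])
  have hminus := nonneg_of_lap_nonpos G hG A (fun v => C * Q v + (-1) * u v + 1 * f v)
    (fun a ha => by
      rw [lap_linear_comb, hQ a ha, hf a ha]
      linarith [(abs_le.mp (hu a ha)).1])
    (fun b hb => by simp [hfb b hb, hQb b hb])
  intro a ha
  rcases Finset.mem_union.mp ha with h | h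
  · have h1 := hplus a h
    have h2 := hminus a h
    exact abs_le.mpr ⟨by linarith, by linarith⟩
  · simp [hfb a h, hQb a h]
end

section
/- Let G be a locally finite simple graph, let D ≥ 1 be real, let Λ be a finite set of vertices containing a distinguished vertex o, each vertex of Λ having at least one neighbor, and let u : V(G) → ℝ satisfy: u(a) > 0 for every a ∈ Λ; u(a) = 0 for every vertex a ∉ Λ; deg(a) ≤ D for every a ∈ Λ; and Δu(a) = 1/deg(a) for every a ∈ Λ \ {o}. Then for every a ∈ Λ there exist m ≥ 0 and a path of vertices a = a₀ ∼ a₁ ∼ ⋯ ∼ a_m = o, all lying in Λ, such that u(a_{i+1}) ≥ u(a_i) + 1/D for every 0 ≤ i < m. -/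
/-!
Away from `o`, the equation `Δu(a) = 1/deg(a)` says that the increments `u b - u a` over the
neighbours `b` of `a` sum to `1`, so one of them is at least `1/deg(a) ≥ 1/D`
(`exists_neighbor_add_le`). Such a neighbour `b` has `u b > u a > 0`, and since `u` vanishes off
`Λ`, it lies in `Λ`. Repeating the step from `b` strictly increases `u`, so on the finite set `Λ`
the process must stop, and it can only stop at `o`.
-/

open Finset

/-- At a vertex where `Δu = 1/deg`, some neighbour exceeds the value of `u` by at least the
average increment `1/deg(a) ≥ 1/D`. -/
lemma exists_neighbor_add_le {V : Type*} (G : SimpleGraph V)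
    [∀ v : V, Fintype (G.neighborSet v)] {D : ℝ} {u : V → ℝ} {a : V}
    (hdeg : 0 < G.degree a) (hdegD : (G.degree a : ℝ) ≤ D)
    (hlap : lap G u a = 1 / (G.degree a : ℝ)) :
    ∃ b, G.Adj a b ∧ u a + 1 / D ≤ u b := by
  have hd : (0 : ℝ) < G.degree a := by exact_mod_cast hdeg
  have hsum : ∑ b ∈ G.neighborFinset a, (u b - u a) = 1 := by
    unfold lap at hlap
    field_simp at hlap
    exact hlap
  have hne : (G.neighborFinset a).Nonempty := by
    rw [← Finset.card_pos, G.card_neighborFinset_eq_degree]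
    exact hdeg
  obtain ⟨b, hb, hle⟩ := Finset.exists_le_of_sum_le
    (f := fun _ => 1 / (G.degree a : ℝ)) (g := fun b => u b - u a) hne (by
      rw [hsum, Finset.sum_const, G.card_neighborFinset_eq_degree, nsmul_eq_mul,
        mul_one_div_cancel hd.ne'])
  refine ⟨b, (G.mem_neighborFinset a b).1 hb, ?_⟩
  have := one_div_le_one_div_of_le hd hdegD
  linarith

/-- **Increasing path to the origin (Lemma 7.4 / Lemma `crude-upper-bound`).**
Let `Λ` be a finite set of vertices of a locally finite graph containing a
distinguished vertex `o`, with every vertex of `Λ` of positive degree at most `D`.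
If `u > 0` on `Λ`, `u = 0` off `Λ`, and `Δu(a) = 1/deg(a)` for every `a ∈ Λ \ {o}`,
then from every `a ∈ Λ` there is a walk `a = a₀ ∼ a₁ ∼ ⋯ ∼ a_m = o` all of whose
vertices lie in `Λ` and along which `u(a_{i+1}) ≥ u(a_i) + 1/D`. -/
theorem increasing_path_to_origin {V : Type*} (G : SimpleGraph V)
    [∀ v : V, Fintype (G.neighborSet v)]
    (D : ℝ) (hD : 1 ≤ D)
    (Λ : Finset V) (o : V) (ho : o ∈ Λ)
    (hdeg : ∀ a ∈ Λ, 0 < G.degree a)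
    (u : V → ℝ)
    (hpos : ∀ a ∈ Λ, 0 < u a)
    (hzero : ∀ a ∉ Λ, u a = 0)
    (hdegD : ∀ a ∈ Λ, (G.degree a : ℝ) ≤ D)
    (hlap : ∀ a ∈ Λ, a ≠ o → lap G u a = 1 / (G.degree a : ℝ)) :
    ∀ a ∈ Λ, ∃ p : G.Walk a o,
      (∀ c ∈ p.support, c ∈ Λ) ∧
      List.Chain' (fun x y => u x + 1 / D ≤ u y) p.support := by
  intro a
  have hD' : 0 < 1 / D := by positivity
  -- Induction on the number of vertices of `Λ` with a larger value of `u`.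
  induction hn : #{b ∈ Λ | u a < u b} using Nat.strong_induction_on generalizing a with
  | _ n ih =>
    intro ha
    by_cases hao : a = o
    · subst hao
      exact ⟨.nil, by simpa using ha, List.isChain_singleton a⟩
    obtain ⟨b, hab, hle⟩ :=
      exists_neighbor_add_le G (hdeg a ha) (hdegD a ha) (hlap a ha hao)
    have hlt : u a < u b := by linarith
    have hb : b ∈ Λ := by
      by_contra hb
      linarith [hzero b hb, hpos a ha]
    have hcard : #{c ∈ Λ | u b < u c} < n := by
      rw [← hn]
      refine Finset.card_lt_card (Finset.ssubset_iff_of_subset ?_ |>.2 ⟨b, ?_, ?_⟩)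
      · exact Finset.monotone_filter_right _ fun c _ hc => hlt.trans hc
      · simp [hb, hlt]
      · simp
    obtain ⟨p, hp, hchain⟩ := ih _ hcard b rfl hb
    refine ⟨.cons hab p, by simpa [ha] using hp, ?_⟩
    rw [p.support_eq_cons] at hchain
    rw [SimpleGraph.Walk.support_cons, p.support_eq_cons]
    exact List.isChain_cons_cons.2 ⟨hle, hchain⟩
end
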